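/- arXiv:2404.15476 — 2 statements merged into one kernel-verified Lean document; each statement's English description precedes it below -/
import Mathlib

section
/- Let G be a group acting faithfully by homeomorphisms on a compact metric space X such that the set of points with finite G-orbit is dense in X. Then G is residually finite. In particular, every group admitting a chaotic almost minimal action is residually finite. -/
/-!
A point with finite orbit has a stabilizer of finite index, so an element lying in every subgroup of
finite index fixes every point with finite orbit. If these points are dense then, the space being
Hausdorff, such an element acts as the identity, and by faithfulness it is trivial.
-/

open Set MeasureTheory

instance homeomorphGroup {X : Type*} [TopologicalSpace X] : Group (X ≃ₜ X) where
  mul f g := g.trans f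
  one := Homeomorph.refl X
  inv f := f.symm
  mul_assoc f g h := Homeomorph.ext fun _ => rfl
  one_mul f := Homeomorph.ext fun _ => rfl
  mul_one f := Homeomorph.ext fun _ => rfl
  inv_mul_cancel f := Homeomorph.ext fun x => f.symm_apply_apply x

def shiftHomeo (A : Type*) [TopologicalSpace A] : (ℤ → A) ≃ₜ (ℤ → A) where
  toFun x := fun n => x (n + 1)
  invFun x := fun n => x (n - 1)
  left_inv x := funext fun n => by simp
  right_inv x := funext fun n => by simp
  continuous_toFun := continuous_pi fun n => continuous_apply (n + 1)
  continuous_invFun := continuous_pi fun n => continuous_apply (n - 1)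

def restrictHomeo {X : Type*} [TopologicalSpace X] (e : X ≃ₜ X) (s : Set X)
    (h : ∀ x, x ∈ s ↔ e x ∈ s) : s ≃ₜ s where
  toEquiv := e.toEquiv.subtypeEquiv h
  continuous_toFun := by
    exact Continuous.subtype_mk (e.continuous.comp continuous_subtype_val) _
  continuous_invFun := by
    exact Continuous.subtype_mk (e.symm.continuous.comp continuous_subtype_val) _

def IsCAMZ {X : Type*} [TopologicalSpace X] (T : X ≃ₜ X) : Prop :=
  (∀ n : ℤ, n ≠ 0 → T ^ n ≠ 1) ∧
  (∀ U V : Set X, IsOpen U → IsOpen V → U.Nonempty → V.Nonempty →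
      ∃ n : ℤ, ((T ^ n) '' U ∩ V).Nonempty) ∧
  Dense {x : X | ∃ k : ℕ, 0 < k ∧ (T ^ k) x = x} ∧
  ∀ A : Set X, IsClosed A → T '' A = A → A ≠ Set.univ → A.Finite

def IsCAM {G X : Type*} [Group G] [TopologicalSpace X] (T : G →* (X ≃ₜ X)) : Prop :=
  Function.Injective T ∧
  (∀ U V : Set X, IsOpen U → IsOpen V → U.Nonempty → V.Nonempty →
      ∃ g : G, ((T g) '' U ∩ V).Nonempty) ∧
  Dense {x : X | (Set.range fun g : G => T g x).Finite} ∧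
  ∀ A : Set X, IsClosed A → (∀ g : G, T g '' A = A) → A ≠ Set.univ → A.Finite

theorem exists_finite_monoidHom_ne_one.{u} {G : Type*} [Group G] [Group.ResiduallyFinite G]
    {g : G} (hg : g ≠ 1) :
    ∃ (H : Type u) (_ : Group H) (_ : Finite H) (φ : G →* H), φ g ≠ 1 := by
  obtain ⟨N, hgN⟩ := Group.exists_finiteIndexNormalSubgroup_notMem g hg
  obtain ⟨H, _, _, ⟨e⟩⟩ := Finite.exists_type_univ_nonempty_mulEquiv.{_, u} (G ⧸ N.toSubgroup)
  refine ⟨H, inferInstance, inferInstance, e.toMonoidHom.comp (QuotientGroup.mk' N.toSubgroup), ?_⟩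
  simpa using FiniteIndexNormalSubgroup.mem_toSubgroup_iff.not.mpr hgN

section MulAction

open MulAction

theorem eq_one_of_dense_fixedBy {M X : Type*} [Monoid M] [MulAction M X] [FaithfulSMul M X]
    [TopologicalSpace X] [T2Space X] [ContinuousConstSMul M X] {m : M}
    (hm : Dense (fixedBy X m)) : m = 1 := by
  have hsmul : (fun x : X => m • x) = id :=
    (continuous_const_smul m).ext_on hm continuous_id fun _ hx => hx
  exact FaithfulSMul.eq_of_smul_eq_smul fun x : X => by rw [congrFun hsmul x, one_smul, id]

variable {G X : Type*} [Group G] [MulAction G X]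

theorem finiteIndex_stabilizer_of_finite_orbit {x : X} (hx : (orbit G x).Finite) :
    (stabilizer G x).FiniteIndex := by
  rw [Subgroup.finiteIndex_iff, index_stabilizer]
  exact (Set.ncard_pos hx).mpr (nonempty_orbit x) |>.ne'

theorem residuallyFinite_of_eq_one_of_finite_orbits_subset_fixedBy
    (h : ∀ g : G, {x : X | (orbit G x).Finite} ⊆ fixedBy X g → g = 1) :
    Group.ResiduallyFinite G := by
  refine Group.residuallyFinite_iff_forall_finiteIndex.mpr fun g hg => h g fun x hx => ?_
  have := finiteIndex_stabilizer_of_finite_orbit hx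
  exact hg (stabilizer G x)

theorem residuallyFinite_of_dense_finite_orbits [FaithfulSMul G X] [TopologicalSpace X]
    [T2Space X] [ContinuousConstSMul G X] (h : Dense {x : X | (orbit G x).Finite}) :
    Group.ResiduallyFinite G :=
  residuallyFinite_of_eq_one_of_finite_orbits_subset_fixedBy fun _ hg =>
    eq_one_of_dense_fixedBy (h.mono hg)

end MulAction

/-- The action of the homeomorphism group on the space by evaluation, for the product of
`homeomorphGroup`, which is composition. -/
instance homeomorphMulAction {X : Type*} [TopologicalSpace X] : MulAction (X ≃ₜ X) X where
  smul f x := f x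
  one_smul _ := rfl
  mul_smul _ _ _ := rfl

theorem statement14_general {G X : Type*} [Group G] [TopologicalSpace X] [T2Space X]
    (T : G →* (X ≃ₜ X)) (hfaith : Function.Injective T)
    (hdense : Dense {x : X | (Set.range fun g : G => T g x).Finite}) :
    Group.ResiduallyFinite G := by
  let _ : MulAction G X := MulAction.compHom X T
  have : ContinuousConstSMul G X := ⟨fun g => (T g).continuous⟩
  have : FaithfulSMul G X := ⟨fun h => hfaith (Homeomorph.ext h)⟩
  exact residuallyFinite_of_dense_finite_orbits hdense

/-- A group acting faithfully by homeomorphisms on a compact metric space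
with a dense set of points with finite orbit is residually finite; in particular every
group admitting a chaotic almost minimal action is residually finite. -/
theorem statement14 {G X : Type*} [Group G] [MetricSpace X] [CompactSpace X]
    (T : G →* (X ≃ₜ X)) (hfaith : Function.Injective T)
    (hdense : Dense {x : X | (Set.range fun g : G => T g x).Finite}) :
    ∀ g : G, g ≠ 1 →
      ∃ (H : Type) (_ : Group H) (_ : Finite H) (φ : G →* H), φ g ≠ 1 := by
  have := statement14_general T hfaith hdense
  exact fun _ hg => exists_finite_monoidHom_ne_one hg
end

section
/- Let (X,T) be a chaotic almost minimal topological G-system and let H be a finite-index normal subgroup of G such that the restricted H-action on X is faithful and some point x ∈ X has dense H-orbit. Then the action of H on X is chaotic almost minimal. -/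
/-!
A dense `H`-orbit makes `H` act topologically transitively. Let `A` be a proper closed
`H`-invariant set. As `H` has finite index, `A` has only finitely many `G`-translates, so their
union `B` is closed and `G`-invariant. If `B` is proper, it is finite, and so is `A ⊆ B`. If `B` is
the whole space, then one of the finitely many closed translates, hence `A` itself, has nonempty
interior; by transitivity of `H` the `H`-invariant closed set `A` is then the whole space, a
contradiction.
-/

open Set MeasureTheory

section GroupAction

open MulAction
open scoped Pointwise

theorem finite_orbit_of_le_stabilizer {G α : Type*} [Group G] [MulAction G α] {H : Subgroup G}
    [H.FiniteIndex] {a : α} (hH : H ≤ stabilizer G a) : (orbit G a).Finite := by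
  have : (stabilizer G a).FiniteIndex := Subgroup.finiteIndex_of_le hH
  exact finite_of_ncard_ne_zero (index_stabilizer G a ▸ Subgroup.FiniteIndex.index_ne_zero)

theorem smul_sUnion_orbit {G α : Type*} [Group G] [MulAction G α] (g : G) (A : Set α) :
    g • ⋃₀ orbit G A = ⋃₀ orbit G A :=
  calc g • ⋃₀ orbit G A = ⋃ B ∈ orbit G A, g • B := smul_set_sUnion g _
    _ = ⋃₀ (g • orbit G A) := (sUnion_image _ _).symm
    _ = ⋃₀ orbit G A := by rw [smul_orbit]

theorem exists_nonempty_interior_of_finite_sUnion {X : Type*} [TopologicalSpace X]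
    {S : Set (Set X)} (hS : S.Finite) (hclosed : ∀ A ∈ S, IsClosed A)
    (hint : (interior (⋃₀ S)).Nonempty) : ∃ A ∈ S, (interior A).Nonempty := by
  induction S, hS using Set.Finite.induction_on with
  | empty => simp at hint
  | @insert A S _ _ ih =>
    obtain ⟨hA, hS⟩ := forall_mem_insert.1 hclosed
    rcases (interior (⋃₀ S)).eq_empty_or_nonempty with hempty | hne
    · rw [sUnion_insert, interior_union_isClosed_of_interior_empty hA hempty] at hint
      exact ⟨A, mem_insert A S, hint⟩
    · obtain ⟨B, hB, hBint⟩ := ih hS hne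
      exact ⟨B, mem_insert_of_mem A hB, hBint⟩

variable {G X : Type*} [Group G] [TopologicalSpace X] [MulAction G X]

theorem isTopologicallyTransitive_of_dense_orbit {x : X} (hx : Dense (orbit G x)) :
    IsTopologicallyTransitive G X := by
  refine (isTopologicallyTransitive_iff_dense_iUnion G).2 fun {U} hU hne => ?_
  obtain ⟨y, hyU, hy⟩ := hx.inter_open_nonempty U hU hne
  rw [← orbit_eq_iff.2 hy] at hx
  refine hx.mono ?_
  rintro _ ⟨g, rfl⟩
  exact mem_iUnion.2 ⟨g, smul_mem_smul_set hyU⟩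

theorem eq_univ_of_smul_eq_of_nonempty_interior [IsTopologicallyTransitive G X] {A : Set X}
    (hA : IsClosed A) (hinv : ∀ g : G, g • A = A) (hint : (interior A).Nonempty) : A = univ := by
  have hsub : ⋃ g : G, g • interior A ⊆ A :=
    iUnion_subset fun g => (smul_set_mono interior_subset).trans (hinv g).subset
  rw [← hA.closure_eq]
  exact ((isOpen_interior.dense_iUnion_smul G hint).mono hsub).closure_eq

theorem nonempty_interior_of_sUnion_orbit_eq_univ [ContinuousConstSMul G X] [Nonempty X]
    {A : Set X} (hA : IsClosed A) (hfin : (orbit G A).Finite) (hcover : ⋃₀ orbit G A = univ) :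
    (interior A).Nonempty := by
  obtain ⟨_, ⟨g, rfl⟩, hint⟩ := exists_nonempty_interior_of_finite_sUnion hfin
    (forall_mem_range.2 fun g : G => hA.smul g) (by simp [hcover])
  rwa [interior_smul, smul_set_nonempty] at hint

/-- A chaotic almost minimal action, phrased for `MulAction`, so that the action of a subgroup is
available as an instance. Continuity of the maps `x ↦ g • x` is left to `ContinuousConstSMul`. -/
structure IsChaoticAlmostMinimal (G X : Type*) [Group G] [TopologicalSpace X]
    [MulAction G X] : Prop where
  faithfulSMul : FaithfulSMul G X
  isTopologicallyTransitive : IsTopologicallyTransitive G X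
  dense_finite_orbit : Dense {x : X | (orbit G x).Finite}
  finite_of_smul_eq : ∀ A : Set X, IsClosed A → (∀ g : G, g • A = A) → A ≠ univ → A.Finite

namespace IsChaoticAlmostMinimal

variable [ContinuousConstSMul G X]

theorem finite_of_subgroup_smul_eq (hG : IsChaoticAlmostMinimal G X) (H : Subgroup G)
    [H.FiniteIndex] [IsTopologicallyTransitive H X] {A : Set X} (hA : IsClosed A)
    (hinv : ∀ h : H, h • A = A) (hne : A ≠ univ) : A.Finite := by
  have hfin : (orbit G A).Finite :=
    finite_orbit_of_le_stabilizer (H := H) fun h hh => hinv ⟨h, hh⟩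
  have hclosed : IsClosed (⋃₀ orbit G A) := by
    rw [sUnion_eq_biUnion]
    exact hfin.isClosed_biUnion (forall_mem_range.2 fun g : G => hA.smul g)
  have hproper : ⋃₀ orbit G A ≠ univ := by
    intro hcover
    obtain ⟨x, -⟩ := (ne_univ_iff_exists_notMem A).1 hne
    have : Nonempty X := ⟨x⟩
    exact hne (eq_univ_of_smul_eq_of_nonempty_interior hA hinv
      (nonempty_interior_of_sUnion_orbit_eq_univ hA hfin hcover))
  exact (hG.finite_of_smul_eq _ hclosed (smul_sUnion_orbit · A) hproper).subset
    (subset_sUnion_of_mem (mem_orbit_self A))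

theorem subgroup (hG : IsChaoticAlmostMinimal G X) (H : Subgroup G) [H.FiniteIndex]
    [hH : IsTopologicallyTransitive H X] : IsChaoticAlmostMinimal H X where
  faithfulSMul := have := hG.faithfulSMul; inferInstance
  isTopologicallyTransitive := hH
  dense_finite_orbit := hG.dense_finite_orbit.mono fun x hx => hx.subset (orbit_subgroup_subset H x)
  finite_of_smul_eq _ := hG.finite_of_subgroup_smul_eq H

end IsChaoticAlmostMinimal

end GroupAction

section HomeomorphAction

variable {G X : Type*} [Group G] [TopologicalSpace X]

/-- The action `g • x = T g x` of `G` on `X`, which carries results on `MulAction` over to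
homomorphisms `T`. It depends on `T`, hence is not an instance. -/
abbrev homeomorphAction (T : G →* (X ≃ₜ X)) : MulAction G X where
  smul g x := T g x
  one_smul x := congrArg (· x) T.map_one
  mul_smul g k x := congrArg (· x) (T.map_mul g k)

theorem continuousConstSMul_homeomorphAction (T : G →* (X ≃ₜ X)) :
    letI := homeomorphAction T
    ContinuousConstSMul G X :=
  let := homeomorphAction T
  ⟨fun g => (T g).continuous⟩

theorem isCAM_iff_isChaoticAlmostMinimal (T : G →* (X ≃ₜ X)) :
    letI := homeomorphAction T
    IsCAM T ↔ IsChaoticAlmostMinimal G X := by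
  let := homeomorphAction T
  constructor
  · rintro ⟨hinj, htrans, hdense, hfin⟩
    exact ⟨⟨fun h => hinj (Homeomorph.ext h)⟩,
      ⟨fun {U V} hU hU' hV hV' => htrans U V hU hV hU' hV'⟩, hdense, hfin⟩
  · rintro ⟨hfaith, htrans, hdense, hfin⟩
    exact ⟨fun g k h => hfaith.eq_of_smul_eq_smul fun x : X => congrArg (· x) h,
      fun U V hU hV hU' hV' => htrans.exists_smul_inter hU hU' hV hV', hdense, hfin⟩

end HomeomorphAction

theorem statement17_general {G X : Type*} [Group G] [TopologicalSpace X]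
    (T : G →* (X ≃ₜ X)) (hcam : IsCAM T) (H : Subgroup G) [H.FiniteIndex]
    (htrans : ∀ U V : Set X, IsOpen U → IsOpen V → U.Nonempty → V.Nonempty →
      ∃ h : H, (T h '' U ∩ V).Nonempty) :
    IsCAM (T.comp H.subtype) := by
  let := homeomorphAction T
  have : ContinuousConstSMul G X := continuousConstSMul_homeomorphAction T
  have : MulAction.IsTopologicallyTransitive H X :=
    ⟨fun {U V} hU hU' hV hV' => htrans U V hU hV hU' hV'⟩
  exact (isCAM_iff_isChaoticAlmostMinimal (T.comp H.subtype)).2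
    (((isCAM_iff_isChaoticAlmostMinimal T).1 hcam).subgroup H)

/-- If `(X,T)` is a CAM `G`-system and `H` is a finite-index normal
subgroup of `G` acting faithfully with some point having dense `H`-orbit, then the
`H`-action on `X` is chaotic almost minimal. -/
theorem statement17 {G X : Type*} [Group G] [MetricSpace X] [CompactSpace X]
    (T : G →* (X ≃ₜ X)) (hcam : IsCAM T)
    (H : Subgroup G) (hnorm : H.Normal) (hfin : H.FiniteIndex)
    (hfaith : Function.Injective (T.comp H.subtype))
    (hdense : ∃ x : X, Dense (Set.range fun h : H => T (h : G) x)) :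
    IsCAM (T.comp H.subtype) := by
  obtain ⟨x, hx⟩ := hdense
  let := homeomorphAction T
  have htrans : MulAction.IsTopologicallyTransitive H X :=
    isTopologicallyTransitive_of_dense_orbit (x := x) hx
  exact statement17_general T hcam H fun U V hU hV hU' hV' =>
    htrans.exists_smul_inter hU hU' hV hV'
end
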